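/- arXiv:2209.07055 — 5 statements merged into one kernel-verified Lean document; each statement's English description precedes it below -/
import Mathlib

section
/- Let a valid utility game with information sharing constraints be given, with constraint graph determined by the in-neighborhoods 𝒩. If x⁰ is an equilibrium profile and y is any feasible profile (y i ∈ X i for all i), then f(⋃ i, y i) ≤ (1 + τ) · f(⋃ i, x⁰ i), where τ is the number of distinct closed in-neighborhoods 𝒩 i ∪ {i}. In particular, the price of anarchy of valid utility games with constraint graph G is at least 1/(1 + τ). -/
/-!
With `Y` and `T` the sets selected under `y` and `x₀`, the gain `f (Y ∪ T) - f T` is,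
by submodularity, at most the sum over `i` of the gains of adding `y i` to `T`
(`gain_biUnion_le`), and each of these is at most the gain of adding `y i` to the part `M ⊆ T`
chosen by the in-neighbors of `i` (`gain_antitone`). That last gain is agent `i`'s marginal
contribution to the observed profile after a deviation to `y i`, so by the marginal-contribution
property and equilibrium it is at most the utility `i` observes at `x₀`.

The observed profile depends on `i` only through its closed in-neighborhood. Agents sharing one
thus evaluate their utilities at a common profile, where the sum property (together with
nonnegativity of utilities) bounds their total by `f T`. There are `τ` such groups, so the gain is
at most `τ * f T` (`sum_utility_mask_le`), and monotonicity gives the claim.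
-/

open Finset

/-- The profile observed by agent `i`: actions of agents outside `𝒩 i ∪ {i}` are
replaced by `∅`. -/
def mask {n : ℕ} {S : Type*} (𝒩 : Fin n → Finset (Fin n)) (i : Fin n)
    (x : Fin n → Finset S) : Fin n → Finset S :=
  fun j => if j = i ∨ j ∈ 𝒩 i then x j else ∅

/-- The profile `x` with the actions of agents outside `C` replaced by `∅`. -/
def restrictProfile {n : ℕ} {S : Type*} (C : Finset (Fin n))
    (x : Fin n → Finset S) : Fin n → Finset S :=
  fun j => if j ∈ C then x j else ∅

lemma mask_eq_restrictProfile {n : ℕ} {S : Type*} (𝒩 : Fin n → Finset (Fin n)) (i : Fin n)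
    (x : Fin n → Finset S) : mask 𝒩 i x = restrictProfile (insert i (𝒩 i)) x := by
  funext j
  simp [mask, restrictProfile]

lemma biUnion_restrictProfile_subset {n : ℕ} {S : Type*} [DecidableEq S] (C : Finset (Fin n))
    (x : Fin n → Finset S) : univ.biUnion (restrictProfile C x) ⊆ univ.biUnion x := by
  refine biUnion_mono fun j _ => ?_
  unfold restrictProfile
  split_ifs <;> simp

/-- Submodularity for sets: the gain from adding `D` decreases as the base set grows. Monotonicity
handles elements of `D` already in the larger base set. -/
lemma gain_antitone {S : Type*} [DecidableEq S] (f : Finset S → ℝ)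
    (hsub : ∀ (A B : Finset S) (s : S), A ⊆ B → s ∉ B →
      f (insert s A) - f A ≥ f (insert s B) - f B)
    (hmono : ∀ (A B : Finset S), A ⊆ B → f A ≤ f B)
    {A B : Finset S} (hAB : A ⊆ B) (D : Finset S) :
    f (D ∪ B) - f B ≤ f (D ∪ A) - f A := by
  induction D using Finset.induction_on with
  | empty => simp
  | insert s D _ ih =>
    rw [insert_union, insert_union]
    by_cases hs : s ∈ D ∪ B
    · rw [insert_eq_of_mem hs]
      linarith [hmono (D ∪ A) (insert s (D ∪ A)) (subset_insert _ _)]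
    · linarith [hsub (D ∪ A) (D ∪ B) s (union_subset_union_right hAB) hs]

lemma gain_biUnion_le {ι S : Type*} [DecidableEq S] (f : Finset S → ℝ)
    (hsub : ∀ (A B : Finset S) (s : S), A ⊆ B → s ∉ B →
      f (insert s A) - f A ≥ f (insert s B) - f B)
    (hmono : ∀ (A B : Finset S), A ⊆ B → f A ≤ f B)
    (T : Finset S) (y : ι → Finset S) (I : Finset ι) :
    f (I.biUnion y ∪ T) - f T ≤ ∑ i ∈ I, (f (y i ∪ T) - f T) := by
  classical
  induction I using Finset.induction_on with
  | empty => simp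
  | insert a I ha ih =>
    rw [biUnion_insert, sum_insert ha, union_assoc]
    linarith [gain_antitone f hsub hmono (subset_union_right : T ⊆ I.biUnion y ∪ T) (y a)]

/-- The utilities the agents observe at `x` total at most the welfare of `x` once for each distinct
closed in-neighborhood: the sum property applies within each group of agents that share one. -/
lemma sum_utility_mask_le {n : ℕ} {S : Type*} [DecidableEq S] (f : Finset S → ℝ)
    (hmono : ∀ (A B : Finset S), A ⊆ B → f A ≤ f B)
    (𝒩 : Fin n → Finset (Fin n))
    (U : Fin n → (Fin n → Finset S) → ℝ)
    (hmarg : ∀ (i : Fin n) (x : Fin n → Finset S),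
      U i x ≥ f (univ.biUnion x) - f ((univ.erase i).biUnion x))
    (hsum : ∀ x : Fin n → Finset S, ∑ i, U i x ≤ f (univ.biUnion x))
    (x : Fin n → Finset S) :
    ∑ i, U i (mask 𝒩 i x) ≤
      ((univ.image (fun i => insert i (𝒩 i))).card : ℝ) * f (univ.biUnion x) := by
  have hU : ∀ i z, 0 ≤ U i z := fun i z => by
    linarith [hmarg i z, hmono _ _ (biUnion_subset_biUnion_of_subset_left z (erase_subset i univ))]
  rw [← sum_fiberwise_of_maps_to
    (fun i _ => mem_image_of_mem (fun i => insert i (𝒩 i)) (mem_univ i)), ← nsmul_eq_mul]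
  refine sum_le_card_nsmul _ _ _ fun C _ => ?_
  calc ∑ i ∈ univ with insert i (𝒩 i) = C, U i (mask 𝒩 i x)
      = ∑ i ∈ univ with insert i (𝒩 i) = C, U i (restrictProfile C x) := by
        refine sum_congr rfl fun i hi => ?_
        rw [mask_eq_restrictProfile, (mem_filter.1 hi).2]
    _ ≤ ∑ i, U i (restrictProfile C x) :=
        sum_le_sum_of_subset_of_nonneg (filter_subset _ _) fun i _ _ => hU i _
    _ ≤ f (univ.biUnion (restrictProfile C x)) := hsum _
    _ ≤ f (univ.biUnion x) := hmono _ _ (biUnion_restrictProfile_subset C x)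

/-- **Theorem 1 (lower bound).**  In any valid utility game with information sharing
constraints given by in-neighborhoods `𝒩`, if `x₀` is an equilibrium profile and `y`
is any feasible profile, then `f(⋃ i, y i) ≤ (1 + τ) · f(⋃ i, x₀ i)`, where `τ` is the
number of distinct closed in-neighborhoods `𝒩 i ∪ {i}`.  In particular the price of
anarchy is at least `1/(1 + τ)`. -/
theorem vug_poa_lower_bound
    {n : ℕ} {S : Type*} [Fintype S] [DecidableEq S]
    (f : Finset S → ℝ)
    (hsub : ∀ (A B : Finset S) (s : S), A ⊆ B → s ∉ B →
      f (insert s A) - f A ≥ f (insert s B) - f B)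
    (hmono : ∀ (A B : Finset S), A ⊆ B → f A ≤ f B)
    (hnorm : f ∅ = 0)
    (𝒩 : Fin n → Finset (Fin n))
    (h𝒩 : ∀ i, i ∉ 𝒩 i)
    (X : Fin n → Set (Finset S))
    (hX : ∀ i, (X i).Nonempty)
    (U : Fin n → (Fin n → Finset S) → ℝ)
    (hmarg : ∀ (i : Fin n) (x : Fin n → Finset S),
      U i x ≥ f (univ.biUnion x) - f ((univ.erase i).biUnion x))
    (hsum : ∀ x : Fin n → Finset S, ∑ i, U i x ≤ f (univ.biUnion x))
    (x₀ : Fin n → Finset S) (hx₀ : ∀ i, x₀ i ∈ X i)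
    (heq : ∀ i : Fin n, ∀ a ∈ X i,
      U i (mask 𝒩 i x₀) ≥ U i (mask 𝒩 i (Function.update x₀ i a)))
    (y : Fin n → Finset S) (hy : ∀ i, y i ∈ X i)
    (τ : ℕ) (hτ : τ = (univ.image (fun i => insert i (𝒩 i))).card) :
    f (univ.biUnion y) ≤ (1 + (τ : ℝ)) * f (univ.biUnion x₀) := by
  have hgain : ∀ i, f (y i ∪ univ.biUnion x₀) - f (univ.biUnion x₀) ≤ U i (mask 𝒩 i x₀) := by
    intro i
    set z := mask 𝒩 i (Function.update x₀ i (y i)) with hz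
    have hzi : z i = y i := by simp [hz, mask]
    have hM : (univ.erase i).biUnion z ⊆ univ.biUnion x₀ := by
      refine biUnion_subset.2 fun j hj => ?_
      have hji : j ≠ i := ne_of_mem_erase hj
      have hzj : z j ⊆ x₀ j := by
        simp only [hz, mask, Function.update_of_ne hji]
        split_ifs <;> simp
      exact hzj.trans (subset_biUnion_of_mem x₀ (mem_univ j))
    have hunion : univ.biUnion z = y i ∪ (univ.erase i).biUnion z := by
      rw [← hzi, ← biUnion_insert, insert_erase (mem_univ i)]
    have hm := hmarg i z
    rw [hunion] at hm
    linarith [gain_antitone f hsub hmono hM (y i), heq i (y i) (hy i)]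
  have htotal := (gain_biUnion_le f hsub hmono (univ.biUnion x₀) y univ).trans
    ((sum_le_sum fun i _ => hgain i).trans (sum_utility_mask_le f hmono 𝒩 U hmarg hsum x₀))
  rw [← hτ] at htotal
  linarith [hmono (univ.biUnion y) (univ.biUnion y ∪ univ.biUnion x₀) subset_union_left]
end

section
/- The bound of Theorem 1 is tight: for every n ≥ 2, every system of in-neighborhoods 𝒩 on n agents having at least one edge (some 𝒩 i nonempty), and every ε > 0, there exist a finite base set S, a submodular, nondecreasing, normalized welfare function f, action sets X i, and utility functions U i satisfying the valid utility game conditions, together with an equilibrium profile x⁰ and a feasible profile y with f(⋃ i, y i) > 0, such that f(⋃ i, x⁰ i) / f(⋃ i, y i) ≤ 1/(1 + τ) + ε, where τ is the number of distinct closed in-neighborhoods 𝒩 i ∪ {i}. -/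
/-!
The base set is `{e} ∪ {s₁, …, sₙ}`, encoded as `Fin (n + 1)` with `e = 0` and `sᵢ = i.succ`, and
welfare is cardinality.  At the equilibrium everybody plays `{e}`, for a welfare of `1`.  Fix a set
`R` with one representative of each distinct closed in-neighborhood.  Agent `i` then observes the
profile `obsProfile C i`, in which exactly the members of its closed in-neighborhood `C i` play
`{e}`.  These profiles differ between different neighborhoods, so at each of them the whole welfare
`1` can be paid to the representative of that neighborhood; at all other profiles agents get their
marginal contributions, whose sum is at most the welfare (`sum_marginal_le`).

A representative `i` can deviate to `altAction i`, which contains the private element `sᵢ`, and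
also `e` if `i` observes somebody else.  In its own view the marginal contribution of that action is
only `1`: if `e` is present it is already covered by a neighbor.  So there is no incentive to
deviate.  Together the alternative actions cover the `τ` private elements, and also `e` because there
is at least one edge, giving welfare `1 + τ`.  The ratio is exactly `1 / (1 + τ)`.
-/

open Finset

/-- The profile seen by agent `j` when everybody plays `{0}` and `C j` is the closed
in-neighborhood of `j`. -/
def obsProfile {n : ℕ} (C : Fin n → Finset (Fin n)) (j : Fin n) : Fin n → Finset (Fin (n + 1)) :=
  fun k => if k ∈ C j then {0} else ∅

/-- Marginal contribution of agent `i` to the number of covered elements. -/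
def marginal {n m : ℕ} (i : Fin n) (x : Fin n → Finset (Fin m)) : ℝ :=
  ((univ.biUnion x).card : ℝ) - (((univ.erase i).biUnion x).card : ℝ)

open Classical in
/-- The utility of agent `i`: at a profile `obsProfile C j` the welfare `1` goes to the
representative of `C j` in `R`; at other profiles it is the marginal contribution. -/
noncomputable def utility {n : ℕ} (C : Fin n → Finset (Fin n)) (R : Finset (Fin n)) (i : Fin n)
    (x : Fin n → Finset (Fin (n + 1))) : ℝ :=
  if ∃ j, x = obsProfile C j then (if i ∈ R ∧ x = obsProfile C i then 1 else 0) else marginal i x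

/-- The alternative action of agent `i`: the private element `i.succ` if `i` is a representative,
and the common element `0` if `i` observes another agent. -/
def altAction {n : ℕ} (𝒩 : Fin n → Finset (Fin n)) (R : Finset (Fin n)) (i : Fin n) :
    Finset (Fin (n + 1)) :=
  (if (𝒩 i).Nonempty then {0} else ∅) ∪ (if i ∈ R then {i.succ} else ∅)

lemma obsProfile_inj {n : ℕ} {C : Fin n → Finset (Fin n)} {i j : Fin n}
    (h : obsProfile C i = obsProfile C j) : C i = C j := by
  ext k
  have := congrFun h k
  unfold obsProfile at this
  by_cases h1 : k ∈ C i <;> by_cases h2 : k ∈ C j <;> simp_all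

lemma mask_const {n : ℕ} (𝒩 : Fin n → Finset (Fin n)) (i : Fin n) :
    mask 𝒩 i (fun _ => ({0} : Finset (Fin (n + 1)))) =
      obsProfile (fun i => insert i (𝒩 i)) i := by
  funext k
  simp [mask, obsProfile]

lemma biUnion_obsProfile {n : ℕ} {C : Fin n → Finset (Fin n)} (hC : ∀ i, i ∈ C i) (j : Fin n) :
    univ.biUnion (obsProfile C j) = {0} := by
  ext t
  simp only [mem_biUnion, mem_univ, true_and, mem_singleton, obsProfile]
  constructor
  · rintro ⟨k, hk⟩
    split_ifs at hk with h
    · simpa using hk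
    · simp at hk
  · rintro rfl
    exact ⟨j, by simp [hC]⟩

/-- The contributions are the sizes of the pairwise disjoint sets of elements covered by one agent
only. -/
lemma sum_marginal_le {n m : ℕ} (x : Fin n → Finset (Fin m)) :
    ∑ i, marginal i x ≤ ((univ.biUnion x).card : ℝ) := by
  have h1 : ∀ i, marginal i x = ((univ.biUnion x \ (univ.erase i).biUnion x).card : ℝ) := by
    intro i
    have hs : (univ.erase i).biUnion x ⊆ univ.biUnion x :=
      biUnion_subset_biUnion_of_subset_left _ (erase_subset _ _)
    rw [card_sdiff_of_subset hs, Nat.cast_sub (card_le_card hs), marginal]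
  simp_rw [h1]
  rw [← Nat.cast_sum, ← card_biUnion]
  · exact_mod_cast card_le_card (biUnion_subset.2 fun i _ => sdiff_subset)
  · intro i _ j _ hij
    rw [Function.onFun, disjoint_left]
    intro t hi hj
    simp only [mem_sdiff, mem_biUnion, mem_univ, true_and, mem_erase, and_true] at hi hj
    obtain ⟨⟨k, hk⟩, h2⟩ := hi
    have hki : k = i := by
      by_contra h
      exact h2 ⟨k, h, hk⟩
    exact hj.2 ⟨k, hki ▸ hij, hk⟩

lemma marginal_le_utility {n : ℕ} {C : Fin n → Finset (Fin n)} {R : Finset (Fin n)}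
    (hC : ∀ i, i ∈ C i) (hR : ∀ i, ∃ r ∈ R, C r = C i) (i : Fin n)
    (x : Fin n → Finset (Fin (n + 1))) : marginal i x ≤ utility C R i x := by
  classical
  unfold utility
  split_ifs with h1 h2
  · obtain ⟨j, rfl⟩ := h1
    rw [marginal, biUnion_obsProfile hC]
    simp
  · obtain ⟨j, rfl⟩ := h1
    -- Unless `C j = {i}`, which would make `i` a representative, another agent covers `0`.
    have hk : ∃ k ∈ C j, k ≠ i := by
      by_contra! hk
      obtain rfl := hk j (hC j)
      obtain ⟨r, hr, hrj⟩ := hR j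
      obtain rfl := hk r (hrj ▸ hC r)
      exact h2 ⟨hr, rfl⟩
    obtain ⟨k, hk, hki⟩ := hk
    have h0 : (0 : Fin (n + 1)) ∈ (univ.erase i).biUnion (obsProfile C j) :=
      mem_biUnion.2 ⟨k, by simp [hki], by simp [obsProfile, hk]⟩
    rw [marginal, biUnion_obsProfile hC, sub_nonpos]
    exact_mod_cast card_le_card (singleton_subset_iff.2 h0)
  · exact le_rfl

lemma sum_utility_le {n : ℕ} {C : Fin n → Finset (Fin n)} {R : Finset (Fin n)}
    (hC : ∀ i, i ∈ C i) (hinj : Set.InjOn C R)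
    (x : Fin n → Finset (Fin (n + 1))) :
    ∑ i, utility C R i x ≤ ((univ.biUnion x).card : ℝ) := by
  classical
  unfold utility
  split_ifs with h1
  · obtain ⟨j, rfl⟩ := h1
    rw [biUnion_obsProfile hC, sum_boole, card_singleton]
    norm_cast
    rw [card_le_one]
    intro a ha b hb
    simp only [mem_filter, mem_univ, true_and] at ha hb
    exact hinj ha.1 hb.1 (obsProfile_inj (ha.2.symm.trans hb.2))
  · exact sum_marginal_le x

/-- Deviating to the alternative action gains nothing: for a representative the observed marginal
contribution of that action is at most `1`, and for the others it equals `{0}`. -/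
lemma utility_altAction_le {n : ℕ} {𝒩 : Fin n → Finset (Fin n)} (h𝒩 : ∀ i, i ∉ 𝒩 i)
    {R : Finset (Fin n)}
    (hR : ∀ i, ∃ r ∈ R, insert r (𝒩 r) = insert i (𝒩 i)) (i : Fin n) :
    utility (fun i => insert i (𝒩 i)) R i
        (mask 𝒩 i (Function.update (fun _ => {0}) i (altAction 𝒩 R i))) ≤
      utility (fun i => insert i (𝒩 i)) R i (mask 𝒩 i (fun _ => {0})) := by
  classical
  by_cases hi : i ∈ R
  · set z := mask 𝒩 i (Function.update (fun _ => {0}) i (altAction 𝒩 R i)) with hz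
    have hzi : z i = altAction 𝒩 R i := by simp [hz, mask]
    have hne : ¬ ∃ j, z = obsProfile (fun i => insert i (𝒩 i)) j := by
      rintro ⟨j, hj⟩
      have h1 : i.succ ∈ z i := by rw [hzi]; simp [altAction, hi]
      rw [hj, obsProfile] at h1
      split_ifs at h1 <;> simp at h1
    have hsub : univ.biUnion z ⊆ insert i.succ ((univ.erase i).biUnion z) := by
      intro t ht
      obtain ⟨k, -, hk⟩ := mem_biUnion.1 ht
      rw [mem_insert]
      by_cases hki : k = i
      · subst hki
        rw [hzi, altAction, mem_union] at hk
        rcases hk with hk | hk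
        · split_ifs at hk with hN
          · obtain ⟨l, hl⟩ := hN
            have hlk : l ≠ k := fun h => h𝒩 k (h ▸ hl)
            refine Or.inr (mem_biUnion.2 ⟨l, by simp [hlk], ?_⟩)
            simpa [hz, mask, hl, hlk] using hk
          · simp at hk
        · left; simpa [hi] using hk
      · exact Or.inr (mem_biUnion.2 ⟨k, by simp [hki], hk⟩)
    have hcard := (card_le_card hsub).trans (card_insert_le _ _)
    rw [mask_const, utility, utility, if_neg hne, if_pos ⟨i, rfl⟩, if_pos ⟨hi, rfl⟩, marginal,
      sub_le_iff_le_add']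
    exact_mod_cast hcard
  · obtain ⟨r, hr, hri⟩ := hR i
    have hne : r ≠ i := fun h => hi (h ▸ hr)
    have hrN : r ∈ 𝒩 i := by
      have : r ∈ insert i (𝒩 i) := hri ▸ mem_insert_self r (𝒩 r)
      simpa [hne] using this
    have hy : altAction 𝒩 R i = {0} := by
      simp [altAction, hi, show (𝒩 i).Nonempty from ⟨r, hrN⟩]
    rw [hy, show Function.update (fun _ : Fin n => ({0} : Finset (Fin (n + 1)))) i {0} =
      fun _ => {0} from Function.update_eq_self i _]

lemma card_biUnion_altAction {n : ℕ} {𝒩 : Fin n → Finset (Fin n)}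
    (hedge : ∃ i, (𝒩 i).Nonempty) (R : Finset (Fin n)) :
    (univ.biUnion (altAction 𝒩 R)).card = 1 + R.card := by
  have h : univ.biUnion (altAction 𝒩 R) = insert 0 (R.image Fin.succ) := by
    ext t
    simp only [mem_biUnion, mem_univ, true_and, altAction, mem_union, mem_insert, mem_image]
    constructor
    · rintro ⟨k, hk | hk⟩
      · split_ifs at hk <;> simp_all
      · split_ifs at hk with h
        · exact Or.inr ⟨k, h, (mem_singleton.1 hk).symm⟩
        · simp at hk
    · rintro (rfl | ⟨k, hk, rfl⟩)
      · obtain ⟨i, hi⟩ := hedge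
        exact ⟨i, Or.inl (by simp [hi])⟩
      · exact ⟨k, Or.inr (by simp [hk])⟩
  rw [h, card_insert_of_notMem (by simp [Fin.succ_ne_zero]),
    card_image_of_injective _ (Fin.succ_injective n), add_comm]

/-- **Theorem 1 (tightness).**  For every `n ≥ 2`, every system of in-neighborhoods `𝒩`
with at least one edge, and every `ε > 0`, there is a valid utility game (a finite base
set `Fin m`, a submodular, nondecreasing, normalized welfare `f`, action sets `X`,
utilities `U` satisfying the marginal-contribution and sum properties), an equilibrium
profile `x₀` and a feasible profile `y` with `f(⋃ i, y i) > 0`, such that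
`f(⋃ i, x₀ i) / f(⋃ i, y i) ≤ 1/(1 + τ) + ε`, where `τ` is the number of distinct
closed in-neighborhoods `𝒩 i ∪ {i}`. -/
theorem vug_poa_tight
    {n : ℕ} (hn : 2 ≤ n)
    (𝒩 : Fin n → Finset (Fin n))
    (h𝒩 : ∀ i, i ∉ 𝒩 i)
    (hedge : ∃ i, (𝒩 i).Nonempty)
    (ε : ℝ) (hε : 0 < ε) :
    ∃ (m : ℕ) (f : Finset (Fin m) → ℝ)
      (X : Fin n → Set (Finset (Fin m)))
      (U : Fin n → (Fin n → Finset (Fin m)) → ℝ)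
      (x₀ y : Fin n → Finset (Fin m)),
      (∀ (A B : Finset (Fin m)) (s : Fin m), A ⊆ B → s ∉ B →
        f (insert s A) - f A ≥ f (insert s B) - f B) ∧
      (∀ (A B : Finset (Fin m)), A ⊆ B → f A ≤ f B) ∧
      f ∅ = 0 ∧
      (∀ i, (X i).Nonempty) ∧
      (∀ (i : Fin n) (x : Fin n → Finset (Fin m)),
        U i x ≥ f (univ.biUnion x) - f ((univ.erase i).biUnion x)) ∧
      (∀ x : Fin n → Finset (Fin m), ∑ i, U i x ≤ f (univ.biUnion x)) ∧
      (∀ i, x₀ i ∈ X i) ∧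
      (∀ i : Fin n, ∀ a ∈ X i,
        U i (mask 𝒩 i x₀) ≥ U i (mask 𝒩 i (Function.update x₀ i a))) ∧
      (∀ i, y i ∈ X i) ∧
      0 < f (univ.biUnion y) ∧
      f (univ.biUnion x₀) / f (univ.biUnion y) ≤
        1 / (1 + ((univ.image (fun i => insert i (𝒩 i))).card : ℝ)) + ε := by
  classical
  -- One representative of each closed in-neighborhood.
  obtain ⟨R, hRim, hinj⟩ : ∃ R : Finset (Fin n),
      R.image (fun i => insert i (𝒩 i)) = univ.image (fun i => insert i (𝒩 i)) ∧
      Set.InjOn (fun i => insert i (𝒩 i)) (R : Set (Fin n)) := by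
    obtain ⟨s, -, hs⟩ := Set.exists_subset_bijOn Set.univ (fun i => insert i (𝒩 i))
    refine ⟨s.toFinset, ?_, by simpa using hs.injOn⟩
    apply Finset.coe_injective
    simpa using hs.image_eq
  have hR : ∀ i, ∃ r ∈ R, insert r (𝒩 r) = insert i (𝒩 i) := by
    intro i
    have : insert i (𝒩 i) ∈ R.image (fun i => insert i (𝒩 i)) := by
      rw [hRim]; exact mem_image_of_mem _ (mem_univ i)
    simpa using this
  have hcard : (univ.image (fun i => insert i (𝒩 i))).card = R.card := by
    rw [← hRim, card_image_of_injOn hinj]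
  have hC : ∀ i, i ∈ insert i (𝒩 i) := fun i => mem_insert_self _ _
  have hpos : (0 : ℝ) < 1 + (R.card : ℝ) := by positivity
  have hy := card_biUnion_altAction hedge R
  refine ⟨n + 1, fun A => (A.card : ℝ), fun i => {{0}, altAction 𝒩 R i},
    utility (fun i => insert i (𝒩 i)) R, fun _ => {0}, altAction 𝒩 R,
    ?_, ?_, by simp, fun i => ⟨{0}, by simp⟩, ?_, ?_, by simp, ?_, by simp, ?_, ?_⟩
  · intro A B s hAB hs
    simp [card_insert_of_notMem hs, card_insert_of_notMem (fun h => hs (hAB h))]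
  · intro A B hAB
    exact Nat.cast_le.2 (card_le_card hAB)
  · exact fun i x => marginal_le_utility hC hR i x
  · exact fun x => sum_utility_le hC hinj x
  · rintro i a (rfl | rfl)
    · rw [show Function.update (fun _ : Fin n => ({0} : Finset (Fin (n + 1)))) i {0} =
        fun _ => {0} from Function.update_eq_self i _]
    · exact utility_altAction_le h𝒩 hR i
  · simp only [hy]
    push_cast
    exact hpos
  · have hx : (univ.biUnion fun _ : Fin n => ({0} : Finset (Fin (n + 1)))).card ≤ 1 :=
      (card_le_card (biUnion_subset.2 fun _ _ => subset_rfl)).trans_eq (card_singleton _)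
    have hx' : ((univ.biUnion fun _ : Fin n => ({0} : Finset (Fin (n + 1)))).card : ℝ) ≤ 1 := by
      exact_mod_cast hx
    simp only [hy, hcard]
    push_cast
    have := div_le_div_of_nonneg_right hx' hpos.le
    linarith
end

section
/- If every agent uses the marginal contribution utility, the sum property of valid utility games holds: for a submodular, nondecreasing, normalized function f : Finset S → ℝ on a finite set S and any profile x of finite subsets of S indexed by Fin n, ∑ i, ( f(⋃ j, x j) − f(⋃ j ≠ i, x j) ) ≤ f(⋃ j, x j). -/
/-!
Submodularity extends from adding one element to adding a set: the gain from joining a fixed set `C`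
decreases as the base set grows. Hence the marginal contribution of agent `i` over all other agents
is at most its contribution over any smaller group of agents not containing `i`. Adding the agents
one at a time, these latter contributions telescope to `f (⋃ j, x j) - f ∅ = f (⋃ j, x j)`.
-/

open Finset

/-- Diminishing returns for adding a whole set `C`, possibly meeting `A` and `B`. Monotonicity
handles the elements of `C` that already lie in `B` but not in `A`. -/
theorem diminishing_returns_union {S : Type*} [DecidableEq S] (f : Finset S → ℝ)
    (hsub : ∀ (A B : Finset S) (s : S), A ⊆ B → s ∉ B →
      f (insert s A) - f A ≥ f (insert s B) - f B)
    (hmono : ∀ (A B : Finset S), A ⊆ B → f A ≤ f B)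
    {A B : Finset S} (hAB : A ⊆ B) (C : Finset S) :
    f (B ∪ C) - f B ≤ f (A ∪ C) - f A := by
  induction C using Finset.induction_on with
  | empty => simp
  | insert s C _ ih =>
    rw [Finset.union_insert, Finset.union_insert]
    by_cases hs : s ∈ B ∪ C
    · rw [Finset.insert_eq_of_mem hs]
      linarith [hmono _ _ (Finset.subset_insert s (A ∪ C))]
    · linarith [hsub (A ∪ C) (B ∪ C) s (Finset.union_subset_union_left hAB) hs]

/-- **Sum property for marginal contribution utilities.**  For a submodular,
nondecreasing, normalized `f` and any profile `x`, the sum of the marginal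
contributions is at most the total welfare. -/
theorem marginal_contribution_sum_property
    {n : ℕ} {S : Type*} [Fintype S] [DecidableEq S]
    (f : Finset S → ℝ)
    (hsub : ∀ (A B : Finset S) (s : S), A ⊆ B → s ∉ B →
      f (insert s A) - f A ≥ f (insert s B) - f B)
    (hmono : ∀ (A B : Finset S), A ⊆ B → f A ≤ f B)
    (hnorm : f ∅ = 0)
    (x : Fin n → Finset S) :
    ∑ i, (f (univ.biUnion x) - f ((univ.erase i).biUnion x)) ≤
      f (univ.biUnion x) := by
  -- Induct on the group `T` of agents whose contributions have been added so far.
  have key : ∀ T : Finset (Fin n),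
      ∑ i ∈ T, (f (univ.biUnion x) - f ((univ.erase i).biUnion x)) ≤ f (T.biUnion x) := by
    intro T
    induction T using Finset.induction_on with
    | empty => simp [hnorm]
    | insert i T hi ih =>
      have hAB : T.biUnion x ⊆ (univ.erase i).biUnion x :=
        Finset.biUnion_subset_biUnion_of_subset_left x
          (Finset.subset_erase.mpr ⟨Finset.subset_univ T, hi⟩)
      have hU : (univ.erase i).biUnion x ∪ x i = univ.biUnion x := by
        rw [Finset.union_comm, ← Finset.biUnion_insert, Finset.insert_erase (Finset.mem_univ i)]
      have h := diminishing_returns_union f hsub hmono hAB (x i)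
      rw [hU] at h
      rw [Finset.sum_insert hi, Finset.biUnion_insert, Finset.union_comm (x i)]
      linarith
  exact key univ
end

section
/- In any valid utility game with information sharing constraints, if x⁰ is an equilibrium profile and y is any feasible profile (y i ∈ X i for all i), then f(⋃ i, y i) ≤ f(⋃ i, x⁰ i) + ∑ i, U i (mask i x⁰), where mask i x⁰ is the profile observed by agent i under x⁰. -/
/-! Since `f` is monotone, `f (⋃ y) ≤ f (⋃ x₀ ∪ ⋃ y)`. Adding the sets `y i` to `⋃ x₀` one at a
time, submodularity bounds the total gain by the sum of the individual gains
`f (⋃ x₀ ∪ y i) - f (⋃ x₀)` (`gain_biUnion_le_sum`). By diminishing returns for sets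
(`gain_union_anti`), each such gain is at most the gain from adding `y i` to the smaller set `A i`,
the union of the actions of the other agents that agent `i` observes. That last gain is the
marginal contribution of `i` in the masked profile where `i` deviates to `y i`, hence at most the
utility of the deviation, hence at most `U i (mask i x₀)` by the equilibrium condition. -/

open Finset

/-- Diminishing returns for adding a whole set `C` rather than a single element. -/
lemma gain_union_anti {S : Type*} [DecidableEq S] {f : Finset S → ℝ}
    (hsub : ∀ (A B : Finset S) (s : S), A ⊆ B → s ∉ B →
      f (insert s A) - f A ≥ f (insert s B) - f B)
    (hmono : ∀ (A B : Finset S), A ⊆ B → f A ≤ f B)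
    {A B : Finset S} (hAB : A ⊆ B) (C : Finset S) :
    f (B ∪ C) - f B ≤ f (A ∪ C) - f A := by
  induction C using Finset.induction_on with
  | empty => simp
  | insert s C _ ih =>
    rw [union_insert, union_insert]
    by_cases hs : s ∈ B ∪ C
    · rw [insert_eq_of_mem hs]
      linarith [hmono _ _ (subset_insert s (A ∪ C))]
    · linarith [hsub (A ∪ C) (B ∪ C) s (union_subset_union_left hAB) hs]

/-- The gain from adding a union of sets to `B` is at most the sum of the individual gains. -/
lemma gain_biUnion_le_sum {S ι : Type*} [DecidableEq S] {f : Finset S → ℝ}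
    (hsub : ∀ (A B : Finset S) (s : S), A ⊆ B → s ∉ B →
      f (insert s A) - f A ≥ f (insert s B) - f B)
    (hmono : ∀ (A B : Finset S), A ⊆ B → f A ≤ f B)
    (B : Finset S) (y : ι → Finset S) (t : Finset ι) :
    f (B ∪ t.biUnion y) - f B ≤ ∑ i ∈ t, (f (B ∪ y i) - f B) := by
  classical
  induction t using Finset.induction_on with
  | empty => simp
  | insert i t hi ih =>
    have h := gain_union_anti hsub hmono (subset_union_left : B ⊆ B ∪ t.biUnion y) (y i)
    rw [sum_insert hi, biUnion_insert, union_comm (y i), ← union_assoc]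
    linarith

/-- **Key intermediate bound.**  In any valid utility game with information sharing
constraints, for an equilibrium `x₀` and any feasible `y`,
`f(⋃ i, y i) ≤ f(⋃ i, x₀ i) + ∑ i, U i (mask i x₀)`. -/
theorem vug_eq_bound_by_masked_utilities
    {n : ℕ} {S : Type*} [Fintype S] [DecidableEq S]
    (f : Finset S → ℝ)
    (hsub : ∀ (A B : Finset S) (s : S), A ⊆ B → s ∉ B →
      f (insert s A) - f A ≥ f (insert s B) - f B)
    (hmono : ∀ (A B : Finset S), A ⊆ B → f A ≤ f B)
    (hnorm : f ∅ = 0)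
    (𝒩 : Fin n → Finset (Fin n))
    (h𝒩 : ∀ i, i ∉ 𝒩 i)
    (X : Fin n → Set (Finset S))
    (hX : ∀ i, (X i).Nonempty)
    (U : Fin n → (Fin n → Finset S) → ℝ)
    (hmarg : ∀ (i : Fin n) (x : Fin n → Finset S),
      U i x ≥ f (univ.biUnion x) - f ((univ.erase i).biUnion x))
    (hsum : ∀ x : Fin n → Finset S, ∑ i, U i x ≤ f (univ.biUnion x))
    (x₀ : Fin n → Finset S) (hx₀ : ∀ i, x₀ i ∈ X i)
    (heq : ∀ i : Fin n, ∀ a ∈ X i,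
      U i (mask 𝒩 i x₀) ≥ U i (mask 𝒩 i (Function.update x₀ i a)))
    (y : Fin n → Finset S) (hy : ∀ i, y i ∈ X i) :
    f (univ.biUnion y) ≤
      f (univ.biUnion x₀) + ∑ i, U i (mask 𝒩 i x₀) := by
  have hstep : f (univ.biUnion y) ≤ f (univ.biUnion x₀ ∪ univ.biUnion y) :=
    hmono _ _ subset_union_right
  have hgain := gain_biUnion_le_sum hsub hmono (univ.biUnion x₀) y univ
  have hle : ∑ i, (f (univ.biUnion x₀ ∪ y i) - f (univ.biUnion x₀)) ≤
      ∑ i, U i (mask 𝒩 i x₀) := by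
    refine sum_le_sum fun i _ => ?_
    set z := mask 𝒩 i (Function.update x₀ i (y i)) with hz
    have hzi : z i = y i := by simp [hz, mask]
    -- Away from `i` the deviation is invisible, and masking only shrinks actions.
    have hsubset : (univ.erase i).biUnion z ⊆ univ.biUnion x₀ := by
      refine biUnion_subset.2 fun j hj => ?_
      have hji : j ≠ i := ne_of_mem_erase hj
      refine Subset.trans ?_ (subset_biUnion_of_mem x₀ (mem_univ j))
      simp only [hz, mask, Function.update_of_ne hji]
      split_ifs <;> simp
    have hunion : univ.biUnion z = (univ.erase i).biUnion z ∪ y i := by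
      rw [← insert_erase (mem_univ i), biUnion_insert, hzi, union_comm,
        insert_erase (mem_univ i)]
    have hdim := gain_union_anti hsub hmono hsubset (y i)
    have hm := hmarg i z
    rw [hunion] at hm
    linarith [heq i (y i) (hy i)]
  linarith
end

section
/- For every n ≥ 2 there exists a system of in-neighborhoods 𝒩 on n agents obtained from the complete structure (𝒩 i = {j : j ≠ i}) by deleting exactly n − 1 directed edges (i.e., ∑ i, (n − 1 − |𝒩 i|) = n − 1) such that the n closed in-neighborhoods 𝒩 i ∪ {i} are pairwise distinct, so that τ = n. Consequently, removing only n − 1 edges from the complete graph can drive the price-of-anarchy bound 1/(1 + τ) from 1/2 down to 1/(n + 1). -/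
open Finset

/-!
Agent `0` keeps every in-neighbor, and every agent `i + 1` loses only the edge coming from its
predecessor `i`. This deletes one edge for each of the `n - 1` nonzero agents, and the closed
in-neighborhood of an agent is everything except its predecessor (if it has one), so the agent
can be read off from its closed in-neighborhood.
-/

/-- **Removing `n − 1` edges can make every closed in-neighborhood distinct.**  For every
`n ≥ 2` there is a system of in-neighborhoods obtained from the complete structure by
deleting exactly `n − 1` directed edges whose `n` closed in-neighborhoods `𝒩 i ∪ {i}`
are pairwise distinct, so `τ = n`; consequently the price-of-anarchy bound `1/(1 + τ)`
drops from `1/2` to `1/(n + 1)`. -/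
theorem n_minus_one_edges_give_tau_n
    {n : ℕ} (hn : 2 ≤ n) :
    ∃ 𝒩 : Fin n → Finset (Fin n),
      (∀ i, i ∉ 𝒩 i) ∧
      (∑ i, (n - 1 - (𝒩 i).card)) = n - 1 ∧
      (univ.image (fun i => insert i (𝒩 i))).card = n ∧
      (1 : ℝ) / (1 + ((univ.image (fun i => insert i (𝒩 i))).card : ℝ)) =
        1 / (n + 1) := by
  obtain ⟨m, rfl⟩ : ∃ m, n = m + 1 := ⟨n - 1, by omega⟩
  let 𝒩 : Fin (m + 1) → Finset (Fin (m + 1)) :=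
    fun i => univ.filter fun j => j ≠ i ∧ (j : ℕ) + 1 ≠ i
  have closed : ∀ i j, j ∈ insert i (𝒩 i) ↔ (j : ℕ) + 1 ≠ i := by
    intro i j
    simp only [𝒩, mem_insert, mem_filter, mem_univ, true_and, Fin.ext_iff, ne_eq]
    omega
  have inj : Function.Injective fun i => insert i (𝒩 i) := by
    intro a b hab
    have h : ∀ j : Fin (m + 1), (j : ℕ) + 1 ≠ a ↔ (j : ℕ) + 1 ≠ b := fun j => by
      rw [← closed, ← closed]
      exact Finset.ext_iff.mp hab j
    -- A nonzero agent is the successor of the only agent missing from its neighborhood.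
    have ha := h ⟨a - 1, by omega⟩
    have hb := h ⟨b - 1, by omega⟩
    simp only at ha hb
    ext
    omega
  have card : (univ.image fun i => insert i (𝒩 i)).card = m + 1 := by
    rw [card_image_of_injective _ inj, card_univ, Fintype.card_fin]
  refine ⟨𝒩, fun i => by simp [𝒩], ?_, card, ?_⟩
  · have h0 : 𝒩 0 = univ.erase 0 := by
      ext j
      simp [𝒩]
    have hs : ∀ i : Fin m, 𝒩 i.succ = (univ.erase i.succ).erase i.castSucc := by
      intro i
      ext j
      simp only [𝒩, mem_filter, mem_erase, mem_univ, true_and, and_true, ne_eq, Fin.ext_iff,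
        Fin.val_succ, Fin.val_castSucc]
      omega
    have hc : ∀ i : Fin m, m + 1 - 1 - (𝒩 i.succ).card = 1 := by
      intro i
      rw [hs, card_erase_of_mem (by simp [Fin.ext_iff]), card_erase_of_mem (mem_univ _),
        card_univ, Fintype.card_fin]
      have := i.isLt
      omega
    rw [Fin.sum_univ_succ, h0, sum_congr rfl fun i _ => hc i]
    simp
  · rw [card, add_comm]
end
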